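/- arXiv:1003.0689 — 2 statements merged into one kernel-verified Lean document; each statement's English description precedes it below -/
import Mathlib

section
/- Let P_k denote the Legendre polynomial of degree k, and for z > 0 and w = cos θ ∈ (−1,1) define U(w,z) = Σ_{k≥0} (−1)^k J_{k+1/2}(z) P_k(w) and V(w,z) = Σ_{k≥0} k J_{k+1/2}(z) P_k(w). Then: U(w,z) = (z/(2π))^{1/2} ∫_{−1}^{1} e^{izu} e^{−(z/2)(1−u²)cos θ} J_0( (z/2)(1−u²) sin θ ) du, and V(w,z) = (1/√π)(z/2)^{3/2} ∫_{−1}^{1} e^{izu} e^{(z/2)(1−u²)cos θ} (1−u²) [ cos θ · J_0( (z/2)(1−u²) sin θ ) − sin θ · J_1( (z/2)(1−u²) sin θ ) ] du. -/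
open scoped BigOperators
open MeasureTheory

noncomputable section

namespace CliffordFourier

/-- The Gegenbauer polynomial `C_k^λ(w)`, defined through the standard three-term
recurrence, equivalent to the generating function `(1-2wt+t²)^{-λ} = Σ_k C_k^λ(w) t^k`. -/
def geg (lam : ℝ) : ℕ → ℝ → ℝ
  | 0, _ => 1
  | 1, w => 2 * lam * w
  | (k+2), w => (2 * ((k : ℝ) + 1 + lam) * w * geg lam (k+1) w
      - ((k : ℝ) + 2 * lam) * geg lam k w) / ((k : ℝ) + 2)

/-- The Bessel function of the first kind
`J_a(z) = Σ_{j≥0} (-1)^j (z/2)^{2j+a} / (j! Γ(j+a+1))`. -/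
def besselJ (a z : ℝ) : ℝ :=
  ∑' j : ℕ, ((-1 : ℝ)^j * (z/2) ^ (2*(j:ℝ) + a)) / (j.factorial * Real.Gamma ((j : ℝ) + a + 1))

/-!
Poisson's integral writes `J_{k+1/2}(z)` as
`√(z / 2π) / k! * ∫_{-1}^1 e^{izu} ((z / 2) (1 - u²))^k du`, because the even moments of
`(1 - u²)^k` are quotients of Gamma values. Laplace's integral
`π P_k(cos θ) = ∫₀^π (cos θ + i sin θ cos α)^k dα`, combined with the Fourier integral of `J_0`,
gives `∑ P_k(cos θ) t^k / k! = e^{t cos θ} J_0(t sin θ)`. Since `|P_k(cos θ)| ≤ 1`, substituting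
`t = r (z / 2) (1 - u²)` under Poisson's integral and summing under the integral sign evaluates
`∑ r^k J_{k+1/2}(z) P_k(cos θ)`. At `r = -1` this is `U`, and its formal `r`-derivative at `r = 1`
is `V`; the latter is obtained in the same way from `∑ P_{k+1}(cos θ) t^k / k!`.
-/

section

open scoped Nat Real
open Complex (I)

section TermwiseIntegration

variable {h q : ℝ → ℂ}

lemma hasSum_integral_mul_of_hasSum_pow_div_factorial {c : ℕ → ℂ} {C : ℝ} (hc : ∀ k, ‖c k‖ ≤ C)
    (hh : Continuous h) (hq : Continuous q) {F : ℝ → ℂ}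
    (hF : ∀ u, HasSum (fun k : ℕ => c k * q u ^ k / k !) (F u)) (a b : ℝ) :
    HasSum (fun k : ℕ => c k / k ! * ∫ u in a..b, h u * q u ^ k) (∫ u in a..b, h u * F u) := by
  obtain ⟨M, hM⟩ := isCompact_uIcc.exists_bound_of_continuousOn (s := Set.uIcc a b) hq.continuousOn
  obtain ⟨N, hN⟩ := isCompact_uIcc.exists_bound_of_continuousOn (s := Set.uIcc a b) hh.continuousOn
  have hC : 0 ≤ C := (norm_nonneg _).trans (hc 0)
  have norm_term_le : ∀ k, ∀ u ∈ Set.uIoc a b,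
      ‖c k / k ! * (h u * q u ^ k)‖ ≤ C * N * (M ^ k / k !) := fun k u hu => by
    have hu' := Set.uIoc_subset_uIcc hu
    have hN₀ : 0 ≤ N := (norm_nonneg _).trans (hN u hu')
    calc ‖c k / k ! * (h u * q u ^ k)‖ = ‖c k‖ * ‖h u‖ * (‖q u‖ ^ k / k !) := by
          simp only [norm_mul, norm_div, norm_pow, Complex.norm_natCast]
          ring
      _ ≤ C * N * (M ^ k / k !) := by
          gcongr
          exacts [hc k, hN u hu', hM u hu']
  simp only [← intervalIntegral.integral_const_mul]
  refine intervalIntegral.hasSum_integral_of_dominated_convergence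
    (fun k _ => C * N * (M ^ k / k !))
    (fun k => Continuous.aestronglyMeasurable (by fun_prop))
    (fun k => .of_forall (norm_term_le k))
    (.of_forall fun _ _ => (Real.summable_pow_div_factorial M).mul_left _)
    intervalIntegrable_const (.of_forall fun u _ => ?_)
  convert! (hF u).mul_left (h u) using 2
  ring

lemma hasSum_integral_mul_cexp (hh : Continuous h) (hq : Continuous q) (a b : ℝ) :
    HasSum (fun k : ℕ => (∫ u in a..b, h u * q u ^ k) / k !)
      (∫ u in a..b, h u * Complex.exp (q u)) := by
  have hexp (u : ℝ) : HasSum (fun k : ℕ => 1 * q u ^ k / k !) (Complex.exp (q u)) := by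
    simpa only [one_mul, Complex.exp_eq_exp_ℂ] using NormedSpace.expSeries_div_hasSum_exp (q u)
  simpa only [one_div_mul_eq_div] using
    hasSum_integral_mul_of_hasSum_pow_div_factorial (fun _ => norm_one.le) hh hq hexp a b

end TermwiseIntegration

section Moments

variable {h g : ℝ → ℝ} {a b : ℝ}

lemma hasSum_moments_integral_mul_cexp (hh : Continuous h) (hg : Continuous g) (x : ℝ) :
    HasSum (fun n : ℕ => (I * x) ^ n / n ! * ((∫ u in a..b, h u * g u ^ n : ℝ) : ℂ))
      (∫ u in a..b, (h u : ℂ) * Complex.exp (I * x * g u)) := by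
  convert! hasSum_integral_mul_cexp (h := fun u => (h u : ℂ)) (q := fun u => I * x * g u)
    (by fun_prop) (by fun_prop) a b using 2 with n
  rw [← intervalIntegral.integral_ofReal, div_mul_eq_mul_div, ← intervalIntegral.integral_const_mul]
  congr! 3
  push_cast
  ring

lemma hasSum_even_moments_integral_mul_cexp (hh : Continuous h) (hg : Continuous g)
    (hodd : ∀ j : ℕ, ∫ u in a..b, h u * g u ^ (2 * j + 1) = 0) (x : ℝ) :
    HasSum (fun j : ℕ =>
        (((-1) ^ j * x ^ (2 * j) / (2 * j)! * ∫ u in a..b, h u * g u ^ (2 * j) : ℝ) : ℂ))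
      (∫ u in a..b, (h u : ℂ) * Complex.exp (I * x * g u)) := by
  have hinj : Function.Injective fun j : ℕ => 2 * j := mul_right_injective₀ two_ne_zero
  convert! (hinj.hasSum_iff fun n hn => ?_).mpr (hasSum_moments_integral_mul_cexp hh hg x) using 2
    with j
  · rw [Function.comp_apply, mul_pow I, pow_mul I, Complex.I_sq]
    push_cast
    rfl
  · obtain ⟨j, rfl | rfl⟩ := n.even_or_odd'
    · exact absurd ⟨j, rfl⟩ hn
    · rw [hodd, Complex.ofReal_zero, mul_zero]

lemma hasSum_odd_moments_integral_mul_cexp (hh : Continuous h) (hg : Continuous g)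
    (heven : ∀ j : ℕ, ∫ u in a..b, h u * g u ^ (2 * j) = 0) (x : ℝ) :
    HasSum (fun j : ℕ => I * (((-1) ^ j * x ^ (2 * j + 1) / (2 * j + 1)! *
        ∫ u in a..b, h u * g u ^ (2 * j + 1) : ℝ) : ℂ))
      (∫ u in a..b, (h u : ℂ) * Complex.exp (I * x * g u)) := by
  have hinj : Function.Injective fun j : ℕ => 2 * j + 1 :=
    (add_left_injective 1).comp (mul_right_injective₀ two_ne_zero)
  convert! (hinj.hasSum_iff fun n hn => ?_).mpr (hasSum_moments_integral_mul_cexp hh hg x) using 2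
    with j
  · rw [Function.comp_apply, mul_pow I, pow_succ I, pow_mul I, Complex.I_sq]
    push_cast
    ring
  · obtain ⟨j, rfl | rfl⟩ := n.even_or_odd'
    · rw [heven, Complex.ofReal_zero, mul_zero]
    · exact absurd ⟨j, rfl⟩ hn

end Moments

section IntegerOrderBessel

lemma besselJ_natCast (n : ℕ) (x : ℝ) :
    besselJ n x = ∑' j : ℕ, (-1) ^ j * (x / 2) ^ (2 * j + n) / (j ! * (j + n)!) := by
  refine tsum_congr fun j => ?_
  rw [← Real.Gamma_nat_eq_factorial (j + n), ← Real.rpow_natCast (x / 2)]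
  push_cast
  rfl

lemma besselJ_natCast_neg (n : ℕ) (x : ℝ) : besselJ n (-x) = (-1) ^ n * besselJ n x := by
  simp only [besselJ_natCast, ← tsum_mul_left]
  refine tsum_congr fun j => ?_
  rw [neg_div, neg_pow (x / 2), pow_add (-1 : ℝ), pow_mul (-1 : ℝ), neg_one_sq, one_pow]
  ring

lemma besselJ_zero_neg (x : ℝ) : besselJ 0 (-x) = besselJ 0 x := by
  simpa using besselJ_natCast_neg 0 x

lemma integral_cos_pow_two_mul (m : ℕ) :
    ∫ α in (0 : ℝ)..π, Real.cos α ^ (2 * m) = π * (2 * m)! / (4 ^ m * (m ! : ℝ) ^ 2) := by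
  induction m with
  | zero => simp
  | succ m ih =>
    rw [mul_add_one, integral_cos_pow, ih]
    simp only [Real.sin_pi, Real.sin_zero, Nat.factorial_succ]
    push_cast
    field_simp
    ring

lemma integral_cos_pow_two_mul_add_one (m : ℕ) :
    ∫ α in (0 : ℝ)..π, Real.cos α ^ (2 * m + 1) = 0 := by
  induction m with
  | zero => simp
  | succ m ih =>
    rw [mul_add_one, add_right_comm, integral_cos_pow, ih]
    simp

lemma integral_cexp_I_mul_cos (x : ℝ) :
    ∫ α in (0 : ℝ)..π, Complex.exp (I * x * Real.cos α) = π * besselJ 0 x := by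
  have hsum := hasSum_even_moments_integral_mul_cexp (h := fun _ => 1) continuous_const
    Real.continuous_cos (by simpa only [one_mul] using integral_cos_pow_two_mul_add_one) x
  simp only [Complex.ofReal_one, one_mul, integral_cos_pow_two_mul] at hsum
  rw [← hsum.tsum_eq, ← Complex.ofReal_tsum, ← Complex.ofReal_mul, ← Nat.cast_zero,
    besselJ_natCast, ← tsum_mul_left]
  congr! 3 with j
  rw [add_zero, add_zero, div_pow, pow_mul 2, show (2 : ℝ) ^ 2 = 4 by norm_num]
  field_simp

lemma integral_cos_mul_cexp_I_mul_cos (x : ℝ) :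
    ∫ α in (0 : ℝ)..π, (Real.cos α : ℂ) * Complex.exp (I * x * Real.cos α)
      = I * (π * besselJ 1 x) := by
  have hsum := hasSum_odd_moments_integral_mul_cexp Real.continuous_cos Real.continuous_cos
    (by simpa only [pow_succ'] using integral_cos_pow_two_mul_add_one) x
  simp only [← pow_succ'] at hsum
  rw [← hsum.tsum_eq, tsum_mul_left, ← Complex.ofReal_tsum, ← Complex.ofReal_mul, ← Nat.cast_one,
    besselJ_natCast, ← tsum_mul_left]
  congr! 4 with j
  rw [show 2 * j + 1 + 1 = 2 * (j + 1) by ring, integral_cos_pow_two_mul,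
    show 2 * (j + 1) = 2 * j + 1 + 1 by ring, Nat.factorial_succ (2 * j + 1), Nat.factorial_succ j,
    div_pow, pow_succ 2, pow_mul 2, show (2 : ℝ) ^ 2 = 4 by norm_num]
  push_cast
  field_simp
  ring

end IntegerOrderBessel

section HalfIntegerOrderBessel

lemma Gamma_natCast_add_half (j : ℕ) :
    Real.Gamma (j + 1 / 2) = (2 * j)! * √π / (4 ^ j * j !) := by
  have hdup := Real.Gamma_mul_Gamma_add_half (j + 1 / 2)
  rw [show (j : ℝ) + 1 / 2 + 1 / 2 = j + 1 by ring, Real.Gamma_nat_eq_factorial,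
    show 2 * ((j : ℝ) + 1 / 2) = (2 * j : ℕ) + 1 by push_cast; ring, Real.Gamma_nat_eq_factorial,
    sub_add_cancel_right, Real.rpow_neg zero_le_two, Real.rpow_natCast, pow_mul,
    show (2 : ℝ) ^ 2 = 4 by norm_num] at hdup
  rw [eq_div_iff (by positivity), mul_left_comm, hdup]
  field_simp

lemma integral_one_sub_sq_pow_mul_pow_two_mul (j k : ℕ) :
    ∫ u in (-1 : ℝ)..1, (1 - u ^ 2) ^ k * u ^ (2 * j)
      = Real.Gamma (j + 1 / 2) * k ! / Real.Gamma (j + k + 3 / 2) := by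
  have Gamma_succ {s t : ℝ} (hs : 0 < s) (ht : t = s + 1) : Real.Gamma t = s * Real.Gamma s := by
    rw [ht, Real.Gamma_add_one hs.ne']
  induction k generalizing j with
  | zero =>
    rw [Gamma_succ (s := j + 1 / 2) (t := j + (0 : ℕ) + 3 / 2) (by positivity) (by push_cast; ring)]
    simp only [pow_zero, one_mul, integral_pow, one_pow, (odd_two_mul_add_one j).neg_one_pow]
    push_cast
    field_simp
    norm_num
  | succ k ih =>
    have hsplit (u : ℝ) : (1 - u ^ 2) ^ (k + 1) * u ^ (2 * j)
        = (1 - u ^ 2) ^ k * u ^ (2 * j) - (1 - u ^ 2) ^ k * u ^ (2 * (j + 1)) := by ring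
    simp only [hsplit]
    rw [intervalIntegral.integral_sub (Continuous.intervalIntegrable (by fun_prop) _ _)
      (Continuous.intervalIntegrable (by fun_prop) _ _), ih, ih,
      Gamma_succ (s := j + 1 / 2) (t := (j + 1 : ℕ) + 1 / 2) (by positivity) (by push_cast; ring),
      Gamma_succ (s := j + k + 3 / 2) (t := (j + 1 : ℕ) + k + 3 / 2) (by positivity)
        (by push_cast; ring),
      Gamma_succ (s := j + k + 3 / 2) (t := j + (k + 1 : ℕ) + 3 / 2) (by positivity)
        (by push_cast; ring), Nat.factorial_succ]
    push_cast
    field_simp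
    ring

lemma integral_one_sub_sq_pow_mul_pow_two_mul_add_one (j k : ℕ) :
    ∫ u in (-1 : ℝ)..1, (1 - u ^ 2) ^ k * u ^ (2 * j + 1) = 0 := by
  have hneg := intervalIntegral.integral_comp_neg (a := -1) (b := 1)
    fun u : ℝ => (1 - u ^ 2) ^ k * u ^ (2 * j + 1)
  simp only [neg_sq, (odd_two_mul_add_one j).neg_pow, mul_neg, intervalIntegral.integral_neg,
    neg_neg] at hneg
  linarith

lemma sqrt_div_two_mul_pi (z : ℝ) : √(z / (2 * π)) = √(z / 2) / √π := by
  rw [← div_div, Real.sqrt_div' _ Real.pi_nonneg]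

lemma rpow_two_mul_add_natCast_add_half {x : ℝ} (hx : 0 ≤ x) (j k : ℕ) :
    x ^ (2 * (j : ℝ) + (k + 1 / 2)) = x ^ (2 * j) * x ^ k * √x := by
  rw [← add_assoc, Real.rpow_add_of_nonneg hx (by positivity) (by positivity),
    Real.sqrt_eq_rpow, ← pow_add, ← Real.rpow_natCast]
  push_cast
  rfl

lemma besselJ_natCast_add_half_eq_integral {z : ℝ} (hz : 0 ≤ z) (k : ℕ) :
    (besselJ (k + 1 / 2) z : ℂ) = (√(z / (2 * π)) : ℝ) * ((z / 2 : ℝ) : ℂ) ^ k / k ! *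
      ∫ u in (-1 : ℝ)..1, (((1 - u ^ 2) ^ k : ℝ) : ℂ) * Complex.exp (I * z * u) := by
  have hsum := hasSum_even_moments_integral_mul_cexp (h := fun u => (1 - u ^ 2) ^ k) (by fun_prop)
    continuous_id' (integral_one_sub_sq_pow_mul_pow_two_mul_add_one · k) z
  rw [← hsum.tsum_eq, ← Complex.ofReal_tsum, ← Complex.ofReal_pow, ← Complex.ofReal_mul,
    ← Complex.ofReal_natCast, ← Complex.ofReal_div, ← Complex.ofReal_mul, besselJ, ← tsum_mul_left]
  congr! 3 with j
  rw [integral_one_sub_sq_pow_mul_pow_two_mul, Gamma_natCast_add_half, sqrt_div_two_mul_pi,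
    rpow_two_mul_add_natCast_add_half (by positivity),
    show (j : ℝ) + (k + 1 / 2) + 1 = j + k + 3 / 2 by ring, div_pow z 2 (2 * j), pow_mul 2,
    show (2 : ℝ) ^ 2 = 4 by norm_num]
  field_simp

end HalfIntegerOrderBessel

section Legendre

/-- The base `w + σ cos α` of Laplace's first integral
`π P_k(w) = ∫₀^π (w + σ cos α)^k dα`, in which `σ` is either square root of `w² - 1`. -/
def laplaceBase (w σ : ℂ) (α : ℝ) : ℂ := w + σ * Real.cos α

@[fun_prop]
lemma continuous_laplaceBase (w σ : ℂ) : Continuous (laplaceBase w σ) := by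
  unfold laplaceBase
  fun_prop

lemma hasDerivAt_sin_mul_laplaceBase_pow {w σ : ℂ} (hσ : σ ^ 2 = w ^ 2 - 1) (k : ℕ) (α : ℝ) :
    HasDerivAt (fun α : ℝ => σ * Real.sin α * laplaceBase w σ α ^ (k + 1))
      ((k + 2) * laplaceBase w σ α ^ (k + 2) - (2 * k + 3) * w * laplaceBase w σ α ^ (k + 1)
        + (k + 1) * laplaceBase w σ α ^ k) α := by
  have hbase : HasDerivAt (laplaceBase w σ) (σ * ((-Real.sin α : ℝ) : ℂ)) α :=
    ((Real.hasDerivAt_cos α).ofReal_comp.const_mul σ).const_add w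
  convert! ((Real.hasDerivAt_sin α).ofReal_comp.const_mul σ).mul (hbase.pow (k + 1)) using 1
  have hcos : σ * Real.cos α = laplaceBase w σ α - w := by rw [laplaceBase]; ring
  have hsin : (σ * Real.sin α) ^ 2 = 2 * w * laplaceBase w σ α - laplaceBase w σ α ^ 2 - 1 := by
    have htrig : (Real.sin α : ℂ) ^ 2 + (Real.cos α : ℂ) ^ 2 = 1 := mod_cast
      Real.sin_sq_add_cos_sq α
    linear_combination σ ^ 2 * htrig + hσ - (σ * Real.cos α + laplaceBase w σ α - w) * hcos
  rw [hcos, Pi.pow_apply, Nat.add_sub_cancel, Complex.ofReal_neg]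
  push_cast only [Nat.cast_add, Nat.cast_one]
  linear_combination (k + 1) * laplaceBase w σ α ^ k * hsin

lemma integral_laplaceBase_pow_add_two {w σ : ℂ} (hσ : σ ^ 2 = w ^ 2 - 1) (k : ℕ) :
    (k + 2) * (∫ α in (0 : ℝ)..π, laplaceBase w σ α ^ (k + 2))
      = (2 * k + 3) * w * (∫ α in (0 : ℝ)..π, laplaceBase w σ α ^ (k + 1))
        - (k + 1) * ∫ α in (0 : ℝ)..π, laplaceBase w σ α ^ k := by
  have hint (c : ℂ) (n : ℕ) :
      IntervalIntegrable (fun α => c * laplaceBase w σ α ^ n) volume 0 π :=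
    Continuous.intervalIntegrable (by fun_prop) _ _
  have hftc := intervalIntegral.integral_eq_sub_of_hasDerivAt
    (fun α _ => hasDerivAt_sin_mul_laplaceBase_pow hσ k α)
    (((hint _ _).sub (hint _ _)).add (hint _ _))
  rw [intervalIntegral.integral_add ((hint _ _).sub (hint _ _)) (hint _ _),
    intervalIntegral.integral_sub (hint _ _) (hint _ _)] at hftc
  simp only [intervalIntegral.integral_const_mul, Real.sin_pi, Real.sin_zero, Complex.ofReal_zero,
    mul_zero, zero_mul, sub_zero] at hftc
  linear_combination hftc

lemma integral_laplaceBase_pow {w : ℝ} {σ : ℂ} (hσ : σ ^ 2 = (w : ℂ) ^ 2 - 1) (k : ℕ) :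
    ∫ α in (0 : ℝ)..π, laplaceBase w σ α ^ k = π * geg (1 / 2) k w := by
  induction k using Nat.twoStepInduction with
  | zero => simp [geg]
  | one =>
    have hcos : ∫ α in (0 : ℝ)..π, (Real.cos α : ℂ) = 0 := by
      rw [intervalIntegral.integral_ofReal]
      simp
    simp only [pow_one, laplaceBase]
    rw [intervalIntegral.integral_add intervalIntegrable_const
      (Continuous.intervalIntegrable (by fun_prop) _ _), intervalIntegral.integral_const_mul, hcos]
    simp [geg]
  | more k ih₀ ih₁ =>
    have hk : (k : ℂ) + 2 ≠ 0 := mod_cast (k + 1).succ_ne_zero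
    apply mul_left_cancel₀ hk
    rw [integral_laplaceBase_pow_add_two hσ, ih₀, ih₁, geg]
    push_cast
    field_simp
    ring

variable (θ t : ℝ)

lemma I_mul_sin_sq : (I * Real.sin θ) ^ 2 = ((Real.cos θ : ℝ) : ℂ) ^ 2 - 1 := by
  have htrig : (Real.sin θ : ℂ) ^ 2 + (Real.cos θ : ℂ) ^ 2 = 1 := mod_cast
    Real.sin_sq_add_cos_sq θ
  rw [mul_pow, Complex.I_sq]
  linear_combination -htrig

lemma norm_laplaceBase_cos_le_one (α : ℝ) :
    ‖laplaceBase (Real.cos θ) (I * Real.sin θ) α‖ ≤ 1 := by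
  have hrect : laplaceBase (Real.cos θ) (I * Real.sin θ) α
      = (Real.cos θ : ℝ) + (Real.sin θ * Real.cos α : ℝ) * I := by
    rw [laplaceBase]
    push_cast
    ring
  rw [hrect, Complex.norm_add_mul_I, Real.sqrt_le_iff, one_pow]
  refine ⟨zero_le_one, ?_⟩
  nlinarith [Real.sin_sq_add_cos_sq θ, Real.cos_sq_le_one α, sq_nonneg (Real.sin θ)]

lemma norm_legendre_cos_le_one (k : ℕ) : ‖(geg (1 / 2) k (Real.cos θ) : ℂ)‖ ≤ 1 := by
  have hle : ‖∫ α in (0 : ℝ)..π, laplaceBase (Real.cos θ) (I * Real.sin θ) α ^ k‖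
      ≤ 1 * |π - 0| :=
    intervalIntegral.norm_integral_le_of_norm_le_const fun α _ => by
      rw [norm_pow]
      exact pow_le_one₀ (norm_nonneg _) (norm_laplaceBase_cos_le_one θ α)
  rw [integral_laplaceBase_pow (I_mul_sin_sq θ), norm_mul, Complex.norm_real π, Real.norm_eq_abs,
    sub_zero, mul_comm] at hle
  exact le_of_mul_le_mul_right hle (abs_pos.mpr Real.pi_ne_zero)

lemma cexp_mul_laplaceBase_cos (α : ℝ) :
    Complex.exp (t * laplaceBase (Real.cos θ) (I * Real.sin θ) α)
      = (Real.exp (t * Real.cos θ) : ℝ) *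
        Complex.exp (I * (t * Real.sin θ : ℝ) * Real.cos α) := by
  rw [Complex.ofReal_exp, ← Complex.exp_add, laplaceBase]
  congr 1
  push_cast
  ring

lemma integral_cexp_mul_laplaceBase_cos :
    ∫ α in (0 : ℝ)..π, Complex.exp (t * laplaceBase (Real.cos θ) (I * Real.sin θ) α)
      = π * (Real.exp (t * Real.cos θ) * besselJ 0 (t * Real.sin θ) : ℝ) := by
  simp only [cexp_mul_laplaceBase_cos, intervalIntegral.integral_const_mul,
    integral_cexp_I_mul_cos]
  push_cast
  ring

lemma integral_laplaceBase_mul_cexp_mul_laplaceBase_cos :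
    ∫ α in (0 : ℝ)..π, laplaceBase (Real.cos θ) (I * Real.sin θ) α *
        Complex.exp (t * laplaceBase (Real.cos θ) (I * Real.sin θ) α)
      = π * (Real.exp (t * Real.cos θ) * (Real.cos θ * besselJ 0 (t * Real.sin θ)
        - Real.sin θ * besselJ 1 (t * Real.sin θ)) : ℝ) := by
  set E : ℝ → ℂ := fun α => Complex.exp (I * (t * Real.sin θ : ℝ) * Real.cos α) with hE
  have hsplit (α : ℝ) : laplaceBase (Real.cos θ) (I * Real.sin θ) α *
      Complex.exp (t * laplaceBase (Real.cos θ) (I * Real.sin θ) α)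
      = (Real.exp (t * Real.cos θ) : ℝ) *
        (Real.cos θ * E α + I * Real.sin θ * (Real.cos α * E α)) := by
    rw [cexp_mul_laplaceBase_cos, laplaceBase]
    ring
  simp only [hsplit, intervalIntegral.integral_const_mul]
  rw [intervalIntegral.integral_add (Continuous.intervalIntegrable (by fun_prop) _ _)
      (Continuous.intervalIntegrable (by fun_prop) _ _)]
  simp only [intervalIntegral.integral_const_mul, hE, integral_cexp_I_mul_cos,
    integral_cos_mul_cexp_I_mul_cos]
  push_cast
  linear_combination (Complex.exp (t * Complex.cos θ) * Complex.sin θ * π *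
    besselJ 1 (t * Real.sin θ)) * Complex.I_sq

lemma hasSum_legendre_cos_mul_pow_div_factorial :
    HasSum (fun k : ℕ => (geg (1 / 2) k (Real.cos θ) : ℂ) * t ^ k / k !)
      (Real.exp (t * Real.cos θ) * besselJ 0 (t * Real.sin θ) : ℝ) := by
  have hsum := hasSum_integral_mul_cexp (h := fun _ => 1)
    (q := fun α => t * laplaceBase (Real.cos θ) (I * Real.sin θ) α)
    (by fun_prop) (by fun_prop) 0 π
  simp only [one_mul, mul_pow, intervalIntegral.integral_const_mul,
    integral_laplaceBase_pow (I_mul_sin_sq θ), integral_cexp_mul_laplaceBase_cos] at hsum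
  rw [← hasSum_mul_left_iff (Complex.ofReal_ne_zero.mpr Real.pi_ne_zero)]
  convert! hsum using 2
  ring

lemma hasSum_legendre_succ_cos_mul_pow_div_factorial :
    HasSum (fun k : ℕ => (geg (1 / 2) (k + 1) (Real.cos θ) : ℂ) * t ^ k / k !)
      (Real.exp (t * Real.cos θ) * (Real.cos θ * besselJ 0 (t * Real.sin θ)
        - Real.sin θ * besselJ 1 (t * Real.sin θ)) : ℝ) := by
  have hsum := hasSum_integral_mul_cexp
    (h := laplaceBase (Real.cos θ) (I * Real.sin θ))
    (q := fun α => t * laplaceBase (Real.cos θ) (I * Real.sin θ) α)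
    (by fun_prop) (by fun_prop) 0 π
  simp only [mul_pow, mul_left_comm _ ((t : ℂ) ^ _), ← pow_succ',
    intervalIntegral.integral_const_mul, integral_laplaceBase_pow (I_mul_sin_sq θ),
    integral_laplaceBase_mul_cexp_mul_laplaceBase_cos] at hsum
  rw [← hasSum_mul_left_iff (Complex.ofReal_ne_zero.mpr Real.pi_ne_zero)]
  convert! hsum using 2
  ring

end Legendre

section BesselLegendreSeries

variable {z : ℝ} (θ r : ℝ)

lemma hasSum_pow_mul_besselJ_mul_legendre_cos (hz : 0 ≤ z) :
    HasSum (fun k : ℕ =>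
        ((r ^ k * besselJ (k + 1 / 2) z * geg (1 / 2) k (Real.cos θ) : ℝ) : ℂ))
      ((√(z / (2 * π)) : ℝ) * ∫ u in (-1 : ℝ)..1, Complex.exp (I * z * u) *
        ((Real.exp (r * (z / 2) * (1 - u ^ 2) * Real.cos θ) *
          besselJ 0 (r * (z / 2) * (1 - u ^ 2) * Real.sin θ) : ℝ) : ℂ)) := by
  have hsum := hasSum_integral_mul_of_hasSum_pow_div_factorial
    (norm_legendre_cos_le_one θ) (h := fun u => Complex.exp (I * z * u))
    (q := fun u => (r * (z / 2) * (1 - u ^ 2) : ℝ)) (by fun_prop) (by fun_prop)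
    (fun u => hasSum_legendre_cos_mul_pow_div_factorial θ (r * (z / 2) * (1 - u ^ 2))) (-1) 1
  convert! hsum.mul_left ((√(z / (2 * π)) : ℝ) : ℂ) using 2 with k
  have hpow (u : ℝ) : Complex.exp (I * z * u) * ((r * (z / 2) * (1 - u ^ 2) : ℝ) : ℂ) ^ k
      = (r * (z / 2) : ℝ) ^ k * ((((1 - u ^ 2) ^ k : ℝ) : ℂ) * Complex.exp (I * z * u)) := by
    push_cast
    rw [mul_pow]
    ring
  simp only [hpow, intervalIntegral.integral_const_mul]
  rw [Complex.ofReal_mul, Complex.ofReal_mul, besselJ_natCast_add_half_eq_integral hz]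
  push_cast
  ring

lemma hasSum_mul_pow_pred_mul_besselJ_mul_legendre_cos (hz : 0 ≤ z) :
    HasSum (fun k : ℕ =>
        ((k * r ^ (k - 1) * besselJ (k + 1 / 2) z * geg (1 / 2) k (Real.cos θ) : ℝ) : ℂ))
      ((√(z / (2 * π)) * (z / 2) : ℝ) * ∫ u in (-1 : ℝ)..1, Complex.exp (I * z * u) *
        ((Real.exp (r * (z / 2) * (1 - u ^ 2) * Real.cos θ) * (1 - u ^ 2) *
          (Real.cos θ * besselJ 0 (r * (z / 2) * (1 - u ^ 2) * Real.sin θ)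
            - Real.sin θ * besselJ 1 (r * (z / 2) * (1 - u ^ 2) * Real.sin θ)) : ℝ) : ℂ)) := by
  have hsum := hasSum_integral_mul_of_hasSum_pow_div_factorial
    (fun k => norm_legendre_cos_le_one θ (k + 1))
    (h := fun u => Complex.exp (I * z * u) * (1 - u ^ 2 : ℝ))
    (q := fun u => (r * (z / 2) * (1 - u ^ 2) : ℝ)) (by fun_prop) (by fun_prop)
    (fun u => hasSum_legendre_succ_cos_mul_pow_div_factorial θ (r * (z / 2) * (1 - u ^ 2))) (-1) 1
  rw [← hasSum_nat_add_iff' 1]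
  simp only [Finset.sum_range_one, Nat.cast_zero, zero_mul, Complex.ofReal_zero, sub_zero,
    Nat.add_sub_cancel]
  convert! hsum.mul_left ((√(z / (2 * π)) * (z / 2) : ℝ) : ℂ) using 2 with k
  · have hpow (u : ℝ) : Complex.exp (I * z * u) * (1 - u ^ 2 : ℝ) *
        ((r * (z / 2) * (1 - u ^ 2) : ℝ) : ℂ) ^ k = (r * (z / 2) : ℝ) ^ k *
          ((((1 - u ^ 2) ^ (k + 1) : ℝ) : ℂ) * Complex.exp (I * z * u)) := by
      push_cast
      rw [mul_pow]
      ring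
    have hk : (k : ℂ) + 1 ≠ 0 := mod_cast k.succ_ne_zero
    simp only [hpow, intervalIntegral.integral_const_mul]
    simp only [Complex.ofReal_mul, besselJ_natCast_add_half_eq_integral hz, Nat.factorial_succ]
    generalize (∫ u in (-1 : ℝ)..1,
      (((1 - u ^ 2) ^ (k + 1) : ℝ) : ℂ) * Complex.exp (I * z * u)) = poissonIntegral
    push_cast
    rw [mul_pow]
    field_simp
    ring
  · congr! 2 with u
    push_cast
    ring

lemma one_div_sqrt_pi_mul_rpow_three_halves (hz : 0 ≤ z) :
    1 / √π * (z / 2) ^ ((3 : ℝ) / 2) = √(z / (2 * π)) * (z / 2) := by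
  rw [sqrt_div_two_mul_pi, show (3 : ℝ) / 2 = 1 / 2 + 1 by norm_num,
    Real.rpow_add_of_nonneg (by positivity) (by norm_num) zero_le_one, Real.rpow_one,
    ← Real.sqrt_eq_rpow]
  ring

end BesselLegendreSeries

theorem UV_integral_representation_general {z : ℝ} (hz : 0 ≤ z) (θ : ℝ) :
    HasSum (fun k : ℕ =>
        (((-1) ^ k * besselJ (k + 1 / 2) z * geg (1 / 2) k (Real.cos θ) : ℝ) : ℂ))
      ((√(z / (2 * π)) : ℝ) * ∫ u in (-1 : ℝ)..1, Complex.exp (I * z * u) *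
        ((Real.exp (-(z / 2) * (1 - u ^ 2) * Real.cos θ) *
          besselJ 0 (z / 2 * (1 - u ^ 2) * Real.sin θ) : ℝ) : ℂ)) ∧
    HasSum (fun k : ℕ =>
        ((k * besselJ (k + 1 / 2) z * geg (1 / 2) k (Real.cos θ) : ℝ) : ℂ))
      ((1 / √π * (z / 2) ^ ((3 : ℝ) / 2) : ℝ) * ∫ u in (-1 : ℝ)..1, Complex.exp (I * z * u) *
        ((Real.exp (z / 2 * (1 - u ^ 2) * Real.cos θ) * (1 - u ^ 2) *
          (Real.cos θ * besselJ 0 (z / 2 * (1 - u ^ 2) * Real.sin θ)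
            - Real.sin θ * besselJ 1 (z / 2 * (1 - u ^ 2) * Real.sin θ)) : ℝ) : ℂ)) := by
  constructor
  · simpa only [neg_mul, one_mul, besselJ_zero_neg] using
      hasSum_pow_mul_besselJ_mul_legendre_cos θ (-1) hz
  · simpa only [one_pow, mul_one, one_mul, one_div_sqrt_pi_mul_rpow_three_halves hz] using
      hasSum_mul_pow_pred_mul_besselJ_mul_legendre_cos θ 1 hz

end

/-- Integral representations for
`U(w,z) = Σ_{k≥0} (-1)^k J_{k+1/2}(z) P_k(w)` and
`V(w,z) = Σ_{k≥0} k J_{k+1/2}(z) P_k(w)`, with `P_k = C_k^{1/2}` the Legendre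
polynomial and `w = cos θ`, `θ ∈ (0,π)`. -/
theorem UV_integral_representation (z : ℝ) (hz : 0 < z)
    (θ : ℝ) (hθ : θ ∈ Set.Ioo (0 : ℝ) Real.pi) (w : ℝ) (hw : w = Real.cos θ) :
    ((∑' k : ℕ, (-1 : ℝ)^k * besselJ ((k:ℝ) + 1/2) z * geg (1/2) k w : ℝ) : ℂ)
      = ((Real.sqrt (z/(2*Real.pi)) : ℝ) : ℂ) *
          ∫ u in (-1 : ℝ)..1,
            Complex.exp (Complex.I * z * u) *
              ((Real.exp (-(z/2) * (1 - u^2) * Real.cos θ)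
                * besselJ 0 ((z/2) * (1 - u^2) * Real.sin θ) : ℝ) : ℂ) ∧
    ((∑' k : ℕ, (k:ℝ) * besselJ ((k:ℝ) + 1/2) z * geg (1/2) k w : ℝ) : ℂ)
      = (((1/Real.sqrt Real.pi) * (z/2) ^ ((3:ℝ)/2) : ℝ) : ℂ) *
          ∫ u in (-1 : ℝ)..1,
            Complex.exp (Complex.I * z * u) *
              ((Real.exp ((z/2) * (1 - u^2) * Real.cos θ) * (1 - u^2) *
                (Real.cos θ * besselJ 0 ((z/2) * (1 - u^2) * Real.sin θ)
                  - Real.sin θ * besselJ 1 ((z/2) * (1 - u^2) * Real.sin θ)) : ℝ) : ℂ) := by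
  subst hw
  obtain ⟨hU, hV⟩ := UV_integral_representation_general hz.le θ
  exact ⟨by rw [Complex.ofReal_tsum, hU.tsum_eq], by rw [Complex.ofReal_tsum, hV.tsum_eq]⟩

end CliffordFourier
end
end

section
/- Let K_− denote the Clifford–Fourier kernel for even m given by its closed form. (i) If m = 2, then for all x, y, z ∈ ℝ²: K_−(x,z) K_−(y,z) = K_−(x+y,z) in Cl_{0,2}. (ii) If m > 2 is even, then there exist x, y, z ∈ ℝ^m with K_−(x,z) K_−(y,z) ≠ K_−(x+y,z). -/
open scoped BigOperators
open MeasureTheory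

noncomputable section

namespace CliffordFourier

/-- Concrete model of the complexified Clifford algebra `Cl_{0,m} ⊗ ℂ`:
an element is the family of its complex coefficients on the canonical basis
`e_S = e_{i₁} ⋯ e_{i_k}` (for `S = {i₁ < … < i_k} ⊆ {0,…,m-1}`). -/
def Cl (m : ℕ) : Type := Finset (Fin m) → ℂ

variable {m : ℕ}

instance : NormedAddCommGroup (Cl m) :=
  inferInstanceAs (NormedAddCommGroup (Finset (Fin m) → ℂ))
instance : NormedSpace ℝ (Cl m) :=
  inferInstanceAs (NormedSpace ℝ (Finset (Fin m) → ℂ))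
instance : Module ℂ (Cl m) := inferInstanceAs (Module ℂ (Finset (Fin m) → ℂ))
instance : CompleteSpace (Cl m) := inferInstanceAs (CompleteSpace (Finset (Fin m) → ℂ))

/-- The coefficient of `a` on the basis element `e_S`. -/
def coeff (a : Cl m) : Finset (Fin m) → ℂ := a

/-- Build an element of the Clifford algebra from its coefficients. -/
def ofCoeff (f : Finset (Fin m) → ℂ) : Cl m := f

/-- `1 = e_∅`. -/
instance : One (Cl m) := ⟨ofCoeff fun S => if S = (∅ : Finset (Fin m)) then 1 else 0⟩

/-- Clifford multiplication, determined by the relations `e_i e_j = - e_j e_i` (`i ≠ j`)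
and `e_i² = -1`; on basis elements it is given by
`e_T · e_U = (-1)^{#{(t,u) ∈ T×U : u < t}} · (-1)^{#(T∩U)} · e_{T Δ U}`. -/
instance : Mul (Cl m) :=
  ⟨fun a b => ofCoeff fun S => ∑ T : Finset (Fin m),
    ((-1 : ℂ) ^ ((((T ×ˢ (symmDiff T S)).filter fun p : Fin m × Fin m => p.2 < p.1).card)
        + (T ∩ (symmDiff T S)).card))
      * coeff a T * coeff b (symmDiff T S)⟩

/-- The generator `e_i`. -/
def e (m : ℕ) (i : Fin m) : Cl m := ofCoeff fun S => if S = {i} then 1 else 0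

/-- The embedding of a vector `x ∈ ℝ^m` as `x = Σ_i x_i e_i` in the Clifford algebra. -/
def vec (m : ℕ) (x : Fin m → ℝ) : Cl m := ∑ i : Fin m, (x i : ℂ) • e m i

/-- The Euclidean inner product `⟨x,y⟩ = Σ_i x_i y_i`. -/
def ip (x y : Fin m → ℝ) : ℝ := ∑ i, x i * y i

/-- The Euclidean norm `|x|`. -/
def nrm (x : Fin m → ℝ) : ℝ := Real.sqrt (ip x x)

/-- The wedge product `x∧y = Σ_{j<k} e_j e_k (x_j y_k - x_k y_j)`. -/
def wedge (m : ℕ) (x y : Fin m → ℝ) : Cl m :=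
  ∑ j : Fin m, ∑ k : Fin m,
    if j < k then ((x j * y k - x k * y j : ℝ) : ℂ) • (e m j * e m k) else 0

/-- Complex conjugation of the coefficients. -/
def cconj (a : Cl m) : Cl m := ofCoeff fun S => starRingEnd ℂ (coeff a S)

/-- The entire function `J̃_a(t) = t^{-a} J_a(t) = Σ_{j≥0} (-1)^j (t/2)^{2j} / (j! Γ(j+a+1) 2^a)`
(for `t > 0` this is literally `t^{-a} J_a(t)`). -/
def besselJt (a t : ℝ) : ℝ :=
  ∑' j : ℕ, ((-1 : ℝ)^j * (t/2) ^ (2*j)) / (j.factorial * Real.Gamma ((j : ℝ) + a + 1) * (2:ℝ)^a)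

/-- `A*_{(m-2)/2}(s,t) = Σ_{ℓ=0}^{⌊m/4-3/4⌋} s^{m/2-2-2ℓ} (1/(2^ℓ ℓ!)) Γ(m/2)/Γ(m/2-2ℓ-1) J̃_{(m-2ℓ-3)/2}(t)`. -/
def Astar (m : ℕ) (s t : ℝ) : ℝ :=
  ∑ l ∈ Finset.range ((m - 3)/4 + 1),
    s ^ (m/2 - 2 - 2*l) * (1 / ((2:ℝ)^l * (l.factorial : ℝ))) *
      (Real.Gamma ((m:ℝ)/2) / Real.Gamma ((m:ℝ)/2 - 2*l - 1)) *
        besselJt (((m:ℝ) - 2*l - 3)/2) t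

/-- `B*_{(m-2)/2}(s,t) = -Σ_{ℓ=0}^{⌊m/4-1/2⌋} s^{m/2-1-2ℓ} (1/(2^ℓ ℓ!)) Γ(m/2)/Γ(m/2-2ℓ) J̃_{(m-2ℓ-3)/2}(t)`. -/
def Bstar (m : ℕ) (s t : ℝ) : ℝ :=
  -∑ l ∈ Finset.range ((m - 2)/4 + 1),
    s ^ (m/2 - 1 - 2*l) * (1 / ((2:ℝ)^l * (l.factorial : ℝ))) *
      (Real.Gamma ((m:ℝ)/2) / Real.Gamma ((m:ℝ)/2 - 2*l)) *
        besselJt (((m:ℝ) - 2*l - 3)/2) t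

/-- `C*_{(m-2)/2}(s,t) = -Σ_{ℓ=0}^{⌊m/4-1/2⌋} s^{m/2-1-2ℓ} (1/(2^ℓ ℓ!)) Γ(m/2)/Γ(m/2-2ℓ) J̃_{(m-2ℓ-1)/2}(t)`. -/
def Cstar (m : ℕ) (s t : ℝ) : ℝ :=
  -∑ l ∈ Finset.range ((m - 2)/4 + 1),
    s ^ (m/2 - 1 - 2*l) * (1 / ((2:ℝ)^l * (l.factorial : ℝ))) *
      (Real.Gamma ((m:ℝ)/2) / Real.Gamma ((m:ℝ)/2 - 2*l)) *
        besselJt (((m:ℝ) - 2*l - 1)/2) t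

/-- The closed form of the Clifford-Fourier kernel in dimension 2:
`K_-(x,y) = cos(x₁y₂ - x₂y₁) + e₁e₂ sin(x₁y₂ - x₂y₁)`. -/
def K2 (x y : Fin 2 → ℝ) : Cl 2 :=
  Real.cos (x 0 * y 1 - x 1 * y 0) • (1 : Cl 2)
    + Real.sin (x 0 * y 1 - x 1 * y 0) • (e 2 0 * e 2 1)

/-- The closed form of the Clifford-Fourier kernel for even `m > 2`:
`K_-(x,y) = (-1)^{m/2} (π/2)^{1/2} ( A*(s,t) + B*(s,t) + (x∧y) C*(s,t) )`
with `s = ⟨x,y⟩` and `t = √(|x|²|y|² - s²)`. -/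
def Kcl (m : ℕ) (x y : Fin m → ℝ) : Cl m :=
  ((-1 : ℝ)^(m/2) * Real.sqrt (Real.pi/2)) •
    ((Astar m (ip x y) (Real.sqrt (ip x x * ip y y - ip x y^2))
        + Bstar m (ip x y) (Real.sqrt (ip x x * ip y y - ip x y^2))) • (1 : Cl m)
      + Cstar m (ip x y) (Real.sqrt (ip x x * ip y y - ip x y^2)) • wedge m x y)

/-!
In dimension two the bivector `e₁e₂` squares to `-1`, so the kernel is `exp(θ e₁e₂)` with an angle
`θ = x₁z₂ - x₂z₁` that is additive in `x`, and multiplicativity is the addition theorem for cosine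
and sine.

For `m ≥ 4` restrict the kernel to a line `x = s z`: there `t = 0` and `x ∧ z = 0`, so it becomes a
real polynomial in `s |z|²`. If the kernel were multiplicative, this polynomial `P` would satisfy
`P(s)² = P(2s)`, hence be constant by comparing degrees. But the coefficient of `P` in degree
`m/2 - 1 > 0` is, up to a nonzero constant, `J̃_{(m-3)/2}(0) = 1 / (Γ((m-1)/2) 2^{(m-3)/2}) ≠ 0`.
-/

section MultiplicativePolynomial

open scoped Polynomial

theorem natDegree_eq_zero_of_sq_eq_comp {R : Type*} [Semiring R] [NoZeroDivisors R] {p q : R[X]}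
    (hq : q.natDegree ≤ 1) (h : p ^ 2 = p.comp q) : p.natDegree = 0 := by
  have hdeg : 2 * p.natDegree = p.natDegree * q.natDegree := by
    rw [← Polynomial.natDegree_pow, h, Polynomial.natDegree_comp]
  nlinarith

theorem natDegree_eq_zero_of_eval_mul_eval_eq_eval_add {R : Type*} [CommRing R] [IsDomain R]
    [Infinite R] {p : R[X]} (h : ∀ a b, p.eval a * p.eval b = p.eval (a + b)) :
    p.natDegree = 0 := by
  refine natDegree_eq_zero_of_sq_eq_comp (q := Polynomial.C 2 * Polynomial.X)
    ((Polynomial.natDegree_C_mul_le 2 _).trans Polynomial.natDegree_X_le)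
    (Polynomial.funext fun a => ?_)
  simp [sq, h, two_mul]

end MultiplicativePolynomial

@[ext]
theorem Cl.ext {a b : Cl m} (h : ∀ S, coeff a S = coeff b S) : a = b := funext h

theorem coeff_zero (S : Finset (Fin m)) : coeff (0 : Cl m) S = 0 := rfl

theorem coeff_add (a b : Cl m) (S : Finset (Fin m)) : coeff (a + b) S = coeff a S + coeff b S := rfl

theorem coeff_smul (r : ℝ) (a : Cl m) (S : Finset (Fin m)) : coeff (r • a) S = r * coeff a S :=
  Complex.real_smul

/-- The sign `±1` in the product rule `e_T e_U = ± e_{T Δ U}` for the canonical basis. It is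
complex-valued to match the summands in the definition of the Clifford product. -/
def mulSign (T U : Finset (Fin m)) : ℂ :=
  (-1) ^ (((T ×ˢ U).filter fun p : Fin m × Fin m => p.2 < p.1).card + (T ∩ U).card)

theorem mulSign_empty_left (U : Finset (Fin m)) : mulSign ∅ U = 1 := by simp [mulSign]

theorem mulSign_empty_right (T : Finset (Fin m)) : mulSign T ∅ = 1 := by simp [mulSign]

theorem coeff_mul (a b : Cl m) (S : Finset (Fin m)) :
    coeff (a * b) S = ∑ T, mulSign T (symmDiff T S) * coeff a T * coeff b (symmDiff T S) := rfl

/-- The element `e_S` of the canonical basis of the Clifford algebra. -/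
def basisElt (S : Finset (Fin m)) : Cl m := ofCoeff fun T => if T = S then 1 else 0

theorem coeff_basisElt (S T : Finset (Fin m)) :
    coeff (basisElt S) T = if T = S then 1 else 0 := rfl

theorem one_eq_basisElt_empty : (1 : Cl m) = basisElt ∅ := rfl

theorem e_eq_basisElt_singleton (i : Fin m) : e m i = basisElt {i} := rfl

theorem coeff_basisElt_mul (T S : Finset (Fin m)) (a : Cl m) :
    coeff (basisElt T * a) S = mulSign T (symmDiff T S) * coeff a (symmDiff T S) := by
  simp [coeff_mul, coeff_basisElt]

theorem basisElt_mul_basisElt (T U : Finset (Fin m)) :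
    basisElt T * basisElt U = mulSign T U • basisElt (symmDiff T U) := by
  ext S
  change _ = mulSign T U * coeff (basisElt (symmDiff T U)) S
  rw [coeff_basisElt_mul, coeff_basisElt, coeff_basisElt]
  by_cases hS : S = symmDiff T U
  · simp [hS]
  · have hU : symmDiff T S ≠ U := fun h => hS (by rw [← h, symmDiff_symmDiff_cancel_left])
    simp [hS, hU]

/-- The unital distributive structure of the Clifford product; associativity plays no part in the
multiplicativity question. -/
instance : NonAssocRing (Cl m) where
  left_distrib a b c := by
    ext S
    simp only [coeff_mul, coeff_add, mul_add, Finset.sum_add_distrib]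
  right_distrib a b c := by
    ext S
    simp only [coeff_mul, coeff_add, mul_add, add_mul, Finset.sum_add_distrib]
  zero_mul a := by
    ext S
    simp only [coeff_mul, coeff_zero, mul_zero, zero_mul, Finset.sum_const_zero]
  mul_zero a := by
    ext S
    simp only [coeff_mul, coeff_zero, mul_zero, Finset.sum_const_zero]
  one_mul a := by
    ext S
    rw [one_eq_basisElt_empty, coeff_basisElt_mul, ← Finset.bot_eq_empty, bot_symmDiff,
      Finset.bot_eq_empty, mulSign_empty_left, one_mul]
  mul_one a := by
    ext S
    have hsymmDiff (T : Finset (Fin m)) : symmDiff T S = ∅ ↔ T = S := symmDiff_eq_bot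
    simp [one_eq_basisElt_empty, coeff_mul, coeff_basisElt, hsymmDiff, mulSign_empty_right]

instance : IsScalarTower ℝ (Cl m) (Cl m) where
  smul_assoc r a b := by
    ext S
    simp only [smul_eq_mul, coeff_smul, coeff_mul, Finset.mul_sum]
    exact Finset.sum_congr rfl fun T _ => by ring

instance : SMulCommClass ℝ (Cl m) (Cl m) where
  smul_comm r a b := by
    ext S
    simp only [smul_eq_mul, coeff_smul, coeff_mul, Finset.mul_sum]
    exact Finset.sum_congr rfl fun T _ => by ring

instance : Nontrivial (Cl m) := inferInstanceAs (Nontrivial (Finset (Fin m) → ℂ))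

theorem cos_add_sin_mul_cos_add_sin {J : Cl m} (hJ : J * J = -1) (α β : ℝ) :
    (Real.cos α • 1 + Real.sin α • J) * (Real.cos β • 1 + Real.sin β • J) =
      Real.cos (α + β) • 1 + Real.sin (α + β) • J := by
  simp only [mul_add, add_mul, smul_mul_smul_comm, one_mul, mul_one, hJ, Real.cos_add,
    Real.sin_add]
  module

theorem e_mul_e_of_lt {i j : Fin m} (hij : i < j) : e m i * e m j = basisElt {i, j} := by
  have hdisj : Disjoint ({i} : Finset (Fin m)) {j} := Finset.disjoint_singleton.2 hij.ne
  have hsign : mulSign ({i} : Finset (Fin m)) {j} = 1 := by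
    simp [mulSign, Finset.filter_singleton, hij.not_gt, hij.ne]
  rw [e_eq_basisElt_singleton, e_eq_basisElt_singleton, basisElt_mul_basisElt, hsign, one_smul,
    hdisj.symmDiff_eq_sup]
  rfl

theorem basisElt_pair_mul_self {i j : Fin m} (hij : i < j) :
    basisElt {i, j} * basisElt {i, j} = -1 := by
  have hinversions : (({i, j} ×ˢ {i, j} : Finset (Fin m × Fin m)).filter fun p => p.2 < p.1) =
      {(j, i)} := by
    ext ⟨a, b⟩
    simp only [Finset.mem_filter, Finset.mem_product, Finset.mem_insert, Finset.mem_singleton,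
      Prod.mk.injEq]
    grind
  have hsign : mulSign {i, j} {i, j} = -1 := by
    rw [mulSign, hinversions, Finset.card_singleton, Finset.inter_self, Finset.card_pair hij.ne]
    norm_num
  rw [basisElt_mul_basisElt, hsign, symmDiff_self, neg_one_smul]
  rfl

theorem e_mul_e_mul_self {i j : Fin m} (hij : i < j) :
    e m i * e m j * (e m i * e m j) = -1 := by
  rw [e_mul_e_of_lt hij, basisElt_pair_mul_self hij]

theorem K2_mul_K2 (x y z : Fin 2 → ℝ) : K2 x z * K2 y z = K2 (x + y) z := by
  have hangle : (x + y) 0 * z 1 - (x + y) 1 * z 0 =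
      (x 0 * z 1 - x 1 * z 0) + (y 0 * z 1 - y 1 * z 0) := by
    simp only [Pi.add_apply]
    ring
  rw [K2, K2, K2, hangle]
  exact cos_add_sin_mul_cos_add_sin (e_mul_e_mul_self Fin.zero_lt_one) _ _

theorem besselJt_zero (a : ℝ) : besselJt a 0 = 1 / (Real.Gamma (a + 1) * 2 ^ a) := by
  rw [besselJt, tsum_eq_single 0 fun j hj => by simp [hj]]
  simp

theorem besselJt_zero_pos {a : ℝ} (ha : -1 < a) : 0 < besselJt a 0 := by
  have hΓ : 0 < Real.Gamma (a + 1) := Real.Gamma_pos_of_pos (by linarith)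
  rw [besselJt_zero]
  positivity

section LinePolynomial

open scoped Polynomial

/-- `A*(s, t)` as a polynomial in `s`, for fixed `t`. -/
def AstarPoly (m : ℕ) (t : ℝ) : ℝ[X] :=
  ∑ l ∈ Finset.range ((m - 3) / 4 + 1), Polynomial.monomial (m / 2 - 2 - 2 * l)
    (1 / ((2 : ℝ) ^ l * (l.factorial : ℝ)) *
      (Real.Gamma ((m : ℝ) / 2) / Real.Gamma ((m : ℝ) / 2 - 2 * l - 1)) *
        besselJt (((m : ℝ) - 2 * l - 3) / 2) t)

/-- `B*(s, t)` as a polynomial in `s`, for fixed `t`. -/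
def BstarPoly (m : ℕ) (t : ℝ) : ℝ[X] :=
  -∑ l ∈ Finset.range ((m - 2) / 4 + 1), Polynomial.monomial (m / 2 - 1 - 2 * l)
    (1 / ((2 : ℝ) ^ l * (l.factorial : ℝ)) *
      (Real.Gamma ((m : ℝ) / 2) / Real.Gamma ((m : ℝ) / 2 - 2 * l)) *
        besselJt (((m : ℝ) - 2 * l - 3) / 2) t)

theorem eval_AstarPoly (m : ℕ) (s t : ℝ) : (AstarPoly m t).eval s = Astar m s t := by
  rw [AstarPoly, Astar, Polynomial.eval_finsetSum]
  exact Finset.sum_congr rfl fun l _ => by rw [Polynomial.eval_monomial]; ring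

theorem eval_BstarPoly (m : ℕ) (s t : ℝ) : (BstarPoly m t).eval s = Bstar m s t := by
  rw [BstarPoly, Bstar, Polynomial.eval_neg, Polynomial.eval_finsetSum]
  exact congrArg _ <| Finset.sum_congr rfl fun l _ => by rw [Polynomial.eval_monomial]; ring

theorem natDegree_AstarPoly_le (m : ℕ) (t : ℝ) : (AstarPoly m t).natDegree ≤ m / 2 - 2 :=
  Polynomial.natDegree_sum_le_of_forall_le _ _ fun _ _ =>
    (Polynomial.natDegree_monomial_le _).trans (Nat.sub_le _ _)

theorem BstarPoly_coeff_half_sub_one (hm : m ≠ 0) (t : ℝ) :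
    (BstarPoly m t).coeff (m / 2 - 1) = -besselJt (((m : ℝ) - 3) / 2) t := by
  have hΓ : Real.Gamma ((m : ℝ) / 2) ≠ 0 := (Real.Gamma_pos_of_pos (by positivity)).ne'
  rw [BstarPoly, Polynomial.coeff_neg, Polynomial.finsetSum_coeff, Finset.sum_eq_single 0]
  · simp [hΓ]
  · intro l hl hl0
    rw [Finset.mem_range] at hl
    exact Polynomial.coeff_monomial_of_ne _ (by omega)
  · simp

/-- The scalar factor of the kernel on a line through `z`, as a polynomial in `⟨x, z⟩`. -/
def linePoly (m : ℕ) : ℝ[X] :=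
  Polynomial.C ((-1) ^ (m / 2) * √(Real.pi / 2)) * (AstarPoly m 0 + BstarPoly m 0)

theorem linePoly_coeff_half_sub_one_ne_zero (hm : 4 ≤ m) : (linePoly m).coeff (m / 2 - 1) ≠ 0 := by
  have hA : (AstarPoly m 0).coeff (m / 2 - 1) = 0 :=
    Polynomial.coeff_eq_zero_of_natDegree_lt <|
      (natDegree_AstarPoly_le m 0).trans_lt (by omega)
  have hJ : 0 < besselJt (((m : ℝ) - 3) / 2) 0 := by
    have : (4 : ℝ) ≤ m := by exact_mod_cast hm
    exact besselJt_zero_pos (by linarith)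
  have hconst : (-1 : ℝ) ^ (m / 2) * √(Real.pi / 2) ≠ 0 :=
    mul_ne_zero (pow_ne_zero _ (by norm_num)) (by positivity)
  rw [linePoly, Polynomial.coeff_C_mul, Polynomial.coeff_add, hA,
    BstarPoly_coeff_half_sub_one (by omega), zero_add]
  exact mul_ne_zero hconst (neg_ne_zero.2 hJ.ne')

end LinePolynomial

theorem ip_smul_left (s : ℝ) (x y : Fin m → ℝ) : ip (s • x) y = s * ip x y :=
  smul_dotProduct s x y

theorem ip_smul_right (s : ℝ) (x y : Fin m → ℝ) : ip x (s • y) = s * ip x y :=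
  dotProduct_smul s x y

theorem wedge_smul_self (s : ℝ) (z : Fin m → ℝ) : wedge m (s • z) z = 0 := by
  refine Finset.sum_eq_zero fun j _ => Finset.sum_eq_zero fun k _ => ?_
  have hminor : (s • z) j * z k - (s • z) k * z j = 0 := by
    simp only [Pi.smul_apply, smul_eq_mul]
    ring
  rw [hminor, Complex.ofReal_zero, zero_smul, ite_self]

theorem Kcl_smul_self (s : ℝ) (z : Fin m → ℝ) :
    Kcl m (s • z) z = (linePoly m).eval (s * ip z z) • (1 : Cl m) := by
  have hgram : s * (s * ip z z) * ip z z - (s * ip z z) ^ 2 = 0 := by ring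
  simp only [Kcl, ip_smul_left, ip_smul_right, wedge_smul_self, hgram, Real.sqrt_zero, smul_zero,
    add_zero, smul_smul, linePoly, Polynomial.eval_mul, Polynomial.eval_C, Polynomial.eval_add,
    eval_AstarPoly, eval_BstarPoly]

theorem exists_Kcl_smul_mul_Kcl_smul_ne (hm : 4 ≤ m) {z : Fin m → ℝ} (hz : z ≠ 0) :
    ∃ a b : ℝ, Kcl m (a • z) z * Kcl m (b • z) z ≠ Kcl m (a • z + b • z) z := by
  by_contra! hmul
  have hzz : ip z z ≠ 0 := dotProduct_self_eq_zero.not.2 hz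
  have heval (s t : ℝ) :
      (linePoly m).eval s * (linePoly m).eval t = (linePoly m).eval (s + t) := by
    have h := hmul (s / ip z z) (t / ip z z)
    rw [← add_smul, Kcl_smul_self, Kcl_smul_self, Kcl_smul_self, smul_mul_smul_comm, one_mul,
      ← add_div, div_mul_cancel₀ _ hzz, div_mul_cancel₀ _ hzz, div_mul_cancel₀ _ hzz] at h
    exact smul_left_injective ℝ (one_ne_zero : (1 : Cl m) ≠ 0) h
  have hdeg : (linePoly m).natDegree = 0 := natDegree_eq_zero_of_eval_mul_eval_eq_eval_add heval
  exact linePoly_coeff_half_sub_one_ne_zero hm (Polynomial.coeff_eq_zero_of_natDegree_lt (by omega))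

/-- In dimension `m = 2` the Clifford-Fourier kernel satisfies
`K_-(x,z) K_-(y,z) = K_-(x+y,z)`, while for every even dimension `m > 2` this
multiplicative property fails. -/
theorem kernel_multiplicativity :
    (∀ x y z : Fin 2 → ℝ, K2 x z * K2 y z = K2 (x + y) z) ∧
    (∀ m : ℕ, Even m → 2 < m →
      ∃ x y z : Fin m → ℝ, Kcl m x z * Kcl m y z ≠ Kcl m (x + y) z) := by
  refine ⟨K2_mul_K2, fun m hEven hm => ?_⟩
  obtain ⟨k, rfl⟩ := hEven
  have : NeZero (k + k) := ⟨by omega⟩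
  obtain ⟨a, b, hab⟩ := exists_Kcl_smul_mul_Kcl_smul_ne (m := k + k) (by omega) one_ne_zero
  exact ⟨a • 1, b • 1, 1, hab⟩

end CliffordFourier
end
end
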